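/- Let d ≥ 1 and σ > 0. Let g : ℝ^d → ℝ be measurable and square-integrable with ∫_{ℝ^d} g(x)² dx > 0 (i.e. g is not almost everywhere zero). Then ∫_{ℝ^d} ∫_{ℝ^d} g(x) · exp( −‖x−x'‖² / (2σ²) ) · g(x') dx dx' > 0 (the double integral being absolutely convergent). -/

import Mathlib

open MeasureTheory

section Helpers

open ProbabilityTheory Filter Topology


theorem gk_gauss_int {d : ℕ} {a : ℝ} (ha : 0 < a) (z : EuclideanSpace ℝ (Fin d)) :
    Integrable (fun x : EuclideanSpace ℝ (Fin d) => Real.exp (-a * ‖x - z‖ ^ 2)) := by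
  have h0 : Integrable (fun x : EuclideanSpace ℝ (Fin d) => Real.exp (-a * ‖x‖ ^ 2)) := by
    by_contra h
    have h1 := integral_undef h
    rw [GaussianFourier.integral_rexp_neg_mul_sq_norm ha] at h1
    have : 0 < (Real.pi / a) ^ (Module.finrank ℝ (EuclideanSpace ℝ (Fin d)) / 2 : ℝ) := by positivity
    linarith
  exact h0.comp_sub_right z

theorem gk_mul_int {d : ℕ} {a : ℝ} (ha : 0 < a) (z : EuclideanSpace ℝ (Fin d)) {g : (EuclideanSpace ℝ (Fin d)) → ℝ}
    (hg_meas : Measurable g) (hg_sq : Integrable (fun x => (g x) ^ 2)) :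
    Integrable (fun x : EuclideanSpace ℝ (Fin d) => Real.exp (-a * ‖x - z‖ ^ 2) * g x) := by
  have h2 := gk_gauss_int (show 0 < 2 * a by positivity) z
  refine (h2.add hg_sq).mono' (Measurable.aestronglyMeasurable (by fun_prop)) ?_
  filter_upwards with x
  have : Real.exp (-(2 * a) * ‖x - z‖ ^ 2) = Real.exp (-a * ‖x - z‖ ^ 2) ^ 2 := by
    rw [← Real.exp_nat_mul]; congr 1; push_cast; ring
  simp only [Pi.add_apply, this, Real.norm_eq_abs, abs_mul]
  nlinarith [sq_nonneg (|Real.exp (-a * ‖x - z‖ ^ 2)| - |g x|),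
    sq_abs (Real.exp (-a * ‖x - z‖ ^ 2)), sq_abs (g x), sq_nonneg (g x),
    sq_nonneg (Real.exp (-a * ‖x - z‖ ^ 2))]

theorem gk_double_int {d : ℕ} {a : ℝ} (ha : 0 < a) {g : (EuclideanSpace ℝ (Fin d)) → ℝ}
    (hg_meas : Measurable g) (hg_sq : Integrable (fun x => (g x) ^ 2)) :
    Integrable (fun z : (EuclideanSpace ℝ (Fin d)) × (EuclideanSpace ℝ (Fin d)) =>
      g z.1 * Real.exp (-a * ‖z.1 - z.2‖ ^ 2) * g z.2) := by
  have h0 : Integrable (fun z : (EuclideanSpace ℝ (Fin d)) × (EuclideanSpace ℝ (Fin d)) =>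
      g z.1 ^ 2 * Real.exp (-a * ‖z.2 - 0‖ ^ 2)) (volume.prod volume) :=
    hg_sq.mul_prod (gk_gauss_int ha 0)
  have h1 : Integrable (fun z : (EuclideanSpace ℝ (Fin d)) × (EuclideanSpace ℝ (Fin d)) =>
      g z.1 ^ 2 * Real.exp (-a * ‖z.1 - z.2‖ ^ 2)) (volume.prod volume) := by
    have := (measurePreserving_prod_sub (volume : Measure (EuclideanSpace ℝ (Fin d))) volume).integrable_comp_of_integrable h0
    refine this.congr ?_
    filter_upwards with z
    simp [norm_sub_rev]
  have h2 := h1.swap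
  refine (h1.add h2).mono' (Measurable.aestronglyMeasurable (by fun_prop)) ?_
  filter_upwards with z
  simp only [Pi.add_apply, Function.comp, Prod.fst_swap, Prod.snd_swap, Real.norm_eq_abs, abs_mul,
    Real.abs_exp, norm_sub_rev z.2 z.1]
  have := Real.exp_pos (-a * ‖z.1 - z.2‖ ^ 2)
  have h3 : |g z.1| * |g z.2| ≤ g z.1 ^ 2 + g z.2 ^ 2 := by
    nlinarith [sq_nonneg (|g z.1| - |g z.2|), sq_abs (g z.1), sq_abs (g z.2), sq_nonneg (g z.1),
      sq_nonneg (g z.2)]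
  nlinarith

theorem gk_ident {d : ℕ} (a : ℝ) (x y z : EuclideanSpace ℝ (Fin d)) :
    Real.exp (-(2 * a) * ‖x - z‖ ^ 2) * Real.exp (-(2 * a) * ‖y - z‖ ^ 2) =
      Real.exp (-a * ‖x - y‖ ^ 2) * Real.exp (-(4 * a) * ‖z - (1 / 2 : ℝ) • (x + y)‖ ^ 2) := by
  rw [← Real.exp_add, ← Real.exp_add]
  congr 1
  have h := parallelogram_law_with_norm ℝ (x - z) (y - z)
  have e1 : x - z + (y - z) = (-2 : ℝ) • (z - (1 / 2 : ℝ) • (x + y)) := by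
    module
  have e2 : x - z - (y - z) = x - y := by abel
  rw [e1, e2, norm_smul] at h
  rw [Real.norm_eq_abs, abs_of_neg (by norm_num : (-2 : ℝ) < 0)] at h
  linear_combination a * h

theorem gk_cont {d : ℕ} {a : ℝ} (ha : 0 < a) {g : (EuclideanSpace ℝ (Fin d)) → ℝ}
    (hg_meas : Measurable g) (hg_sq : Integrable (fun x => (g x) ^ 2)) :
    Continuous (fun z : EuclideanSpace ℝ (Fin d) => ∫ x, Real.exp (-a * ‖x - z‖ ^ 2) * g x) := by
  rw [continuous_iff_continuousAt]
  intro z₀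
  refine continuousAt_of_dominated
    (bound := fun x => Real.exp a * ‖Real.exp (-(a / 2) * ‖x - z₀‖ ^ 2) * g x‖) ?_ ?_ ?_ ?_
  · exact Eventually.of_forall fun z => Measurable.aestronglyMeasurable (by fun_prop)
  · filter_upwards [Metric.ball_mem_nhds z₀ one_pos] with z hz
    filter_upwards with x
    rw [norm_mul, norm_mul, ← mul_assoc]
    refine mul_le_mul_of_nonneg_right ?_ (norm_nonneg _)
    rw [Real.norm_eq_abs, Real.norm_eq_abs, Real.abs_exp, Real.abs_exp, ← Real.exp_add,
      Real.exp_le_exp]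
    rw [Metric.mem_ball, dist_eq_norm] at hz
    have h1 : ‖x - z₀‖ ≤ ‖x - z‖ + ‖z - z₀‖ := norm_sub_le_norm_sub_add_norm_sub _ _ _
    have h2 : ‖x - z₀‖ ^ 2 ≤ (‖x - z‖ + ‖z - z₀‖) ^ 2 := by gcongr
    have h3 : ‖z - z₀‖ ^ 2 ≤ 1 := by nlinarith [norm_nonneg (z - z₀)]
    have h4 : ‖x - z₀‖ ^ 2 ≤ 2 * ‖x - z‖ ^ 2 + 2 := by
      nlinarith [sq_nonneg (‖x - z‖ - ‖z - z₀‖)]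
    nlinarith
  · exact (gk_mul_int (by positivity) z₀ hg_meas hg_sq).norm.const_mul _
  · filter_upwards with x
    fun_prop

theorem gk_triple {d : ℕ} {a : ℝ} (ha : 0 < a) {g : (EuclideanSpace ℝ (Fin d)) → ℝ}
    (hg_meas : Measurable g) (hg_sq : Integrable (fun x => (g x) ^ 2)) :
    Integrable (fun z : EuclideanSpace ℝ (Fin d) => (∫ x, Real.exp (-(2 * a) * ‖x - z‖ ^ 2) * g x) ^ 2) ∧
    ∫ z : EuclideanSpace ℝ (Fin d), (∫ x, Real.exp (-(2 * a) * ‖x - z‖ ^ 2) * g x) ^ 2 =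
      (∫ z : EuclideanSpace ℝ (Fin d), Real.exp (-(4 * a) * ‖z‖ ^ 2)) *
      ∫ p : (EuclideanSpace ℝ (Fin d)) × (EuclideanSpace ℝ (Fin d)), g p.1 * Real.exp (-a * ‖p.1 - p.2‖ ^ 2) * g p.2 := by
  set C := ∫ z : EuclideanSpace ℝ (Fin d), Real.exp (-(4 * a) * ‖z‖ ^ 2) with hC
  let f : ((EuclideanSpace ℝ (Fin d)) × (EuclideanSpace ℝ (Fin d))) → (EuclideanSpace ℝ (Fin d)) → ℝ := fun p z =>
    (Real.exp (-(2 * a) * ‖p.1 - z‖ ^ 2) * g p.1) * (Real.exp (-(2 * a) * ‖p.2 - z‖ ^ 2) * g p.2)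
  have hf : ∀ p z, f p z = (g p.1 * Real.exp (-a * ‖p.1 - p.2‖ ^ 2) * g p.2) *
      Real.exp (-(4 * a) * ‖z - (1 / 2 : ℝ) • (p.1 + p.2)‖ ^ 2) := by
    intro p z
    have := gk_ident a p.1 p.2 z
    simp only [f]
    linear_combination g p.1 * g p.2 * this
  have hC' : ∀ m : EuclideanSpace ℝ (Fin d), ∫ z, Real.exp (-(4 * a) * ‖z - m‖ ^ 2) = C := fun m =>
    integral_sub_right_eq_self (fun z : EuclideanSpace ℝ (Fin d) => Real.exp (-(4 * a) * ‖z‖ ^ 2)) m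
  have hint : Integrable (Function.uncurry f)
      ((volume : Measure ((EuclideanSpace ℝ (Fin d)) × (EuclideanSpace ℝ (Fin d)))).prod (volume : Measure (EuclideanSpace ℝ (Fin d)))) := by
    rw [integrable_prod_iff (Measurable.aestronglyMeasurable (by
      simp only [Function.uncurry_def, f]; fun_prop))]
    constructor
    · filter_upwards with p
      simp only [Function.uncurry_apply_pair, hf]
      exact (gk_gauss_int (by positivity) _).const_mul _
    · simp only [Function.uncurry_apply_pair, hf, norm_mul, Real.norm_eq_abs, Real.abs_exp]
      simp only [integral_const_mul, hC']
      have := ((gk_double_int ha hg_meas hg_sq).norm).mul_const C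
      simpa only [norm_mul, Real.norm_eq_abs, Real.abs_exp] using this
  have hin : ∀ z, ∫ p, f p z = (∫ x, Real.exp (-(2 * a) * ‖x - z‖ ^ 2) * g x) ^ 2 := by
    intro z
    rw [sq]
    exact integral_prod_mul (μ := (volume : Measure (EuclideanSpace ℝ (Fin d)))) (ν := (volume : Measure (EuclideanSpace ℝ (Fin d))))
      (fun x => Real.exp (-(2 * a) * ‖x - z‖ ^ 2) * g x)
      (fun x => Real.exp (-(2 * a) * ‖x - z‖ ^ 2) * g x)
  constructor
  · have := hint.integral_prod_right
    simpa only [Function.uncurry_apply_pair, hin] using this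
  · have := integral_integral_swap hint
    simp only [hin] at this
    rw [← this]
    simp only [hf, integral_const_mul, hC', integral_mul_const]
    rw [mul_comm]

theorem gk_mgf_zero {d : ℕ} {G : (EuclideanSpace ℝ (Fin d)) → ℝ} (hm : Measurable G)
    (hi : ∀ w : EuclideanSpace ℝ (Fin d), Integrable (fun x => Real.exp (inner ℝ w x) * G x))
    (h0 : ∀ w : EuclideanSpace ℝ (Fin d), ∫ x, Real.exp (inner ℝ w x) * G x = 0) :
    G =ᵐ[volume] 0 := by
  have hG : Integrable G := by simpa using hi 0
  let μ : Measure (EuclideanSpace ℝ (Fin d)) := volume.withDensity (fun x => ENNReal.ofReal (G x))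
  let ν : Measure (EuclideanSpace ℝ (Fin d)) := volume.withDensity (fun x => ENNReal.ofReal (-G x))
  have : IsFiniteMeasure μ := isFiniteMeasure_withDensity_ofReal hG.2
  have : IsFiniteMeasure ν := isFiniteMeasure_withDensity_ofReal hG.neg.2
  have hmax : ∀ w : EuclideanSpace ℝ (Fin d), Integrable (fun x => Real.exp (inner ℝ w x) * max (G x) 0) := by
    intro w
    refine (hi w).mono (Measurable.aestronglyMeasurable (by fun_prop)) ?_
    filter_upwards with x
    rw [norm_mul, norm_mul]
    refine mul_le_mul_of_nonneg_left ?_ (norm_nonneg _)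
    rw [Real.norm_eq_abs, Real.norm_eq_abs, abs_of_nonneg (le_max_right _ _)]
    exact max_le (le_abs_self _) (abs_nonneg _)
  have hmax' : ∀ w : EuclideanSpace ℝ (Fin d), Integrable (fun x => Real.exp (inner ℝ w x) * max (-G x) 0) := by
    intro w
    refine ((hmax w).sub (hi w)).congr ?_
    filter_upwards with x
    simp only [Pi.sub_apply, ← mul_sub]
    congr 1
    rcases le_total (G x) 0 with h | h
    · rw [max_eq_right h, max_eq_left (by linarith)]; ring
    · rw [max_eq_left h, max_eq_right (by linarith)]; ring
  have hμi : ∀ w : EuclideanSpace ℝ (Fin d), Integrable (fun x => Real.exp (inner ℝ w x)) μ := by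
    intro w
    rw [integrable_withDensity_iff (by fun_prop) (by simp)]
    simpa only [ENNReal.toReal_ofReal'] using hmax w
  have hμ : ∀ w : EuclideanSpace ℝ (Fin d), ∫ x, Real.exp (inner ℝ w x) ∂μ = ∫ x, Real.exp (inner ℝ w x) ∂ν := by
    intro w
    rw [integral_withDensity_eq_integral_toReal_smul (by fun_prop) (by simp),
      integral_withDensity_eq_integral_toReal_smul (by fun_prop) (by simp), ← sub_eq_zero]
    simp only [ENNReal.toReal_ofReal', smul_eq_mul, mul_comm _ (Real.exp _)]
    rw [← integral_sub (hmax w) (hmax' w)]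
    refine Eq.trans ?_ (h0 w)
    congr 1
    ext x
    rw [← mul_sub]
    congr 1
    rcases le_total (G x) 0 with h | h
    · rw [max_eq_right h, max_eq_left (by linarith)]; ring
    · rw [max_eq_left h, max_eq_right (by linarith)]; ring
  have hz : μ = 0 ↔ ν = 0 := by
    have := hμ 0
    simp only [inner_zero_left, Real.exp_zero, integral_const, smul_eq_mul, mul_one] at this
    rw [← Measure.measure_univ_eq_zero, ← Measure.measure_univ_eq_zero,
      ← measureReal_eq_zero_iff, ← measureReal_eq_zero_iff, this]
  have hμν : μ = ν := by
    refine Measure.ext_of_charFun ?_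
    ext w
    have hmgf : mgf (fun x => inner ℝ w x) μ = mgf (fun x => inner ℝ w x) ν := by
      ext t
      have := hμ (t • w)
      simpa only [mgf, inner_smul_left, conj_trivial] using this
    have hset : integrableExpSet (fun x => inner ℝ w x) μ = Set.univ := by
      ext t
      simp only [Set.mem_univ, iff_true]
      have := hμi (t • w)
      simpa only [integrableExpSet, Set.mem_ofPred_eq, inner_smul_left, conj_trivial] using this
    have := eqOn_complexMGF_of_mgf' hmgf hz (x := Complex.I) (by simp [hset])
    simp only [complexMGF] at this
    simp only [charFun_apply]
    simpa only [mul_comm Complex.I, real_inner_comm w] using this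
  have hae := (withDensity_eq_iff_of_sigmaFinite (by fun_prop) (by fun_prop)).1 hμν
  filter_upwards [hae] with x hx
  have hx' := congrArg ENNReal.toReal hx
  simp only [ENNReal.toReal_ofReal'] at hx'
  rcases le_total (G x) 0 with h | h
  · rw [max_eq_right h, max_eq_left (by linarith)] at hx'; simp; linarith
  · rw [max_eq_left h, max_eq_right (by linarith)] at hx'; simpa using hx'

theorem gk_inj {d : ℕ} {a : ℝ} (ha : 0 < a) {g : (EuclideanSpace ℝ (Fin d)) → ℝ}
    (hg_meas : Measurable g) (hg_sq : Integrable (fun x => (g x) ^ 2))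
    (h : ∀ z : EuclideanSpace ℝ (Fin d), ∫ x, Real.exp (-a * ‖x - z‖ ^ 2) * g x = 0) : g =ᵐ[volume] 0 := by
  have key : ∀ w x : EuclideanSpace ℝ (Fin d), Real.exp (inner ℝ w x) * (Real.exp (-a * ‖x‖ ^ 2) * g x) =
      Real.exp (a * ‖(1 / (2 * a)) • w‖ ^ 2) *
        (Real.exp (-a * ‖x - (1 / (2 * a)) • w‖ ^ 2) * g x) := by
    intro w x
    rw [← mul_assoc, ← mul_assoc, ← Real.exp_add, ← Real.exp_add]
    congr 2
    rw [norm_sub_sq_real, inner_smul_right, real_inner_comm]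
    field_simp
    ring
  have := gk_mgf_zero (G := fun x => Real.exp (-a * ‖x‖ ^ 2) * g x) (by fun_prop)
    (fun w => by
      simp only [key]
      exact (gk_mul_int ha _ hg_meas hg_sq).const_mul _)
    (fun w => by
      simp only [key, integral_const_mul, h, mul_zero])
  filter_upwards [this] with x hx
  simpa [Real.exp_ne_zero] using hx

end Helpers

/-- The Gaussian kernel on ℝ^d is integrally strictly positive definite. -/
theorem stmt_7 (d : ℕ) (hd : 1 ≤ d) (σ : ℝ) (hσ : 0 < σ)
    (g : EuclideanSpace ℝ (Fin d) → ℝ)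
    (hg_meas : Measurable g)
    (hg_sq : Integrable (fun x => (g x) ^ 2))
    (hg_pos : 0 < ∫ x, (g x) ^ 2) :
    Integrable (fun z : EuclideanSpace ℝ (Fin d) × EuclideanSpace ℝ (Fin d) =>
      g z.1 * Real.exp (-‖z.1 - z.2‖ ^ 2 / (2 * σ ^ 2)) * g z.2) ∧
    0 < ∫ z : EuclideanSpace ℝ (Fin d) × EuclideanSpace ℝ (Fin d),
      g z.1 * Real.exp (-‖z.1 - z.2‖ ^ 2 / (2 * σ ^ 2)) * g z.2 := by
  obtain ⟨a, ha, hae⟩ : ∃ a : ℝ, 0 < a ∧ ∀ t : ℝ, -t / (2 * σ ^ 2) = -a * t :=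
    ⟨1 / (2 * σ ^ 2), by positivity, fun t => by ring⟩
  simp only [hae]
  refine ⟨gk_double_int ha hg_meas hg_sq, ?_⟩
  obtain ⟨h1, h2⟩ := gk_triple ha hg_meas hg_sq
  have hC : 0 < ∫ z : EuclideanSpace ℝ (Fin d), Real.exp (-(4 * a) * ‖z‖ ^ 2) := by
    rw [GaussianFourier.integral_rexp_neg_mul_sq_norm (by positivity)]
    positivity
  by_contra hneg
  have h3 : ∫ z : EuclideanSpace ℝ (Fin d),
      (∫ x, Real.exp (-(2 * a) * ‖x - z‖ ^ 2) * g x) ^ 2 = 0 := by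
    refine le_antisymm ?_ (integral_nonneg fun z => sq_nonneg _)
    rw [h2]
    exact mul_nonpos_of_nonneg_of_nonpos hC.le (not_lt.1 hneg)
  rw [integral_eq_zero_iff_of_nonneg (fun z => sq_nonneg _) h1] at h3
  have h4 := (Continuous.ae_eq_iff_eq volume
    ((gk_cont (show 0 < 2 * a by positivity) hg_meas hg_sq).pow 2) continuous_zero).1 h3
  have h5 := gk_inj (show 0 < 2 * a by positivity) hg_meas hg_sq
    (fun z => by simpa using congrFun h4 z)
  have h6 : ∫ x, (g x) ^ 2 = 0 := by
    rw [integral_eq_zero_of_ae]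
    filter_upwards [h5] with x hx
    simp [hx]
  exact hg_pos.ne' h6
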